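/- If finite simple graphs G and H satisfy G ≅_{S+} H, then the combinatorial Laplacian matrices of G and H have the same characteristic polynomial, and the Laplacian matrices of their complement graphs also have the same characteristic polynomial. -/

import Mathlib

open Matrix BigOperators

/-- `rel(g,g') = rel(h,h')`. -/
def relEq {α β : Type*} (G : SimpleGraph α) (H : SimpleGraph β)
    (g g' : α) (h h' : β) : Prop :=
  (g = g' ↔ h = h') ∧ (G.Adj g g' ↔ H.Adj h h')

/-- `M` satisfies the linear constraints of an isomorphism matrix for `G` to `H`. -/
def IsIsoMatrix {α β : Type*} [Fintype α] [Fintype β]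
    (G : SimpleGraph α) (H : SimpleGraph β)
    (M : Matrix (α × β) (α × β) ℝ) : Prop :=
  (∀ g g' : α, ∑ h : β, ∑ h' : β, M (g, h) (g', h') = 1) ∧
  (∀ h h' : β, ∑ g : α, ∑ g' : α, M (g, h) (g', h') = 1) ∧
  (∀ g g' h h', ¬ relEq G H g g' h h' → M (g, h) (g', h') = 0)

/-!
A positive semidefinite isomorphism matrix `M` is the Choi matrix of a completely positive map
`Φ X = ∑ k, (B k)ᴴ * X * B k`. The linear constraints say that `Φ` fixes the all-ones matrix and
turns Schur multiplication by `1` and by `A_G` into Schur multiplication by `1` and by `A_H`; hence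
`Φ 1 = 1` and `Φ A_G = A_H`, and symmetrically for the adjoint map `Φ*`. For unital `Φ` and `Φ*`,
the equations `Φ X = Y` and `Φ* Y = X` force, on comparing traces, equality in the Kadison–Schwarz
inequality `(Φ X)ᴴ * Φ X ≤ Φ (Xᴴ * X)`, so every Kraus operator intertwines `X` and `Y`. With
`X = A_G` this gives `Φ (A_G ^ 2) = A_H ^ 2`, and taking diagonals `Φ L_G = L_H`. So the Kraus
operators intertwine the Laplacians too, all powers of which then have equal traces.
-/

section PowerSums

open Polynomial

variable {R : Type*}

theorem sum_map_eval_eq_of_sum_map_pow_eq [CommSemiring R] {s t : Multiset R}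
    (h : ∀ n : ℕ, (s.map (· ^ n)).sum = (t.map (· ^ n)).sum) (p : R[X]) :
    (s.map fun x => p.eval x).sum = (t.map fun x => p.eval x).sum := by
  induction p using Polynomial.induction_on' with
  | add p q hp hq => simp only [eval_add, Multiset.sum_map_add, hp, hq]
  | monomial n a => simp only [eval_monomial, Multiset.sum_map_mul_left, h n]

theorem multiset_eq_of_sum_map_pow_eq [CommRing R] [IsDomain R] [CharZero R] {s t : Multiset R}
    (h : ∀ n : ℕ, (s.map (· ^ n)).sum = (t.map (· ^ n)).sum) : s = t := by
  classical
  ext a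
  -- Summing `p` over `s` or `t` isolates the multiplicity of `a`.
  let p : R[X] := ∏ b ∈ (s + t).toFinset.erase a, (X - C b)
  have eval_self : p.eval a ≠ 0 := by
    simp only [p, eval_prod, eval_sub, eval_X, eval_C, Finset.prod_ne_zero_iff, sub_ne_zero]
    exact fun b hb => (Finset.ne_of_mem_erase hb).symm
  have eval_other : ∀ b ≠ a, b ∈ s + t → p.eval b = 0 := fun b hba hb => by
    rw [eval_prod]
    exact Finset.prod_eq_zero (Finset.mem_erase.2 ⟨hba, Multiset.mem_toFinset.2 hb⟩) (by simp)
  have sum_eval := sum_map_eval_eq_of_sum_map_pow_eq h p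
  rw [Multiset.sum_map_eq_nsmul_single a fun b hba hb =>
      eval_other b hba (Multiset.mem_add.2 (.inl hb)),
    Multiset.sum_map_eq_nsmul_single a fun b hba hb =>
      eval_other b hba (Multiset.mem_add.2 (.inr hb))] at sum_eval
  simpa only [nsmul_eq_mul, mul_eq_mul_right_iff, eval_self, or_false, Nat.cast_inj] using sum_eval

end PowerSums

section Hermitian

variable {𝕜 m n : Type*} [RCLike 𝕜] [Fintype m] [DecidableEq m] [Fintype n] [DecidableEq n]
  {A : Matrix m m 𝕜} {B : Matrix n n 𝕜}

theorem trace_pow_eq_sum_map_roots_charpoly (hA : A.IsHermitian) (k : ℕ) :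
    (A ^ k).trace = (A.charpoly.roots.map (· ^ k)).sum := by
  rw [hA.roots_charpoly_eq_eigenvalues]
  conv_lhs => rw [hA.spectral_theorem, ← map_pow, Unitary.conjStarAlgAut_apply, trace_mul_comm,
    ← mul_assoc]
  simp [diagonal_pow, trace_diagonal]

theorem charpoly_eq_of_trace_pow_eq (hA : A.IsHermitian) (hB : B.IsHermitian)
    (h : ∀ k : ℕ, (A ^ k).trace = (B ^ k).trace) : A.charpoly = B.charpoly := by
  have roots_eq : A.charpoly.roots = B.charpoly.roots :=
    multiset_eq_of_sum_map_pow_eq fun k => by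
      simpa only [trace_pow_eq_sum_map_roots_charpoly, hA, hB] using h k
  rw [hA.splits_charpoly.eq_prod_roots_of_monic A.charpoly_monic,
    hB.splits_charpoly.eq_prod_roots_of_monic B.charpoly_monic, roots_eq]

end Hermitian

section KrausMap

variable {R 𝕜 α β κ : Type*}

/-- The completely positive map `X ↦ ∑ k, (B k)ᴴ * X * B k` with Kraus operators `B k`. Its adjoint
for the trace pairing has the Kraus operators `(B k)ᴴ`. -/
def krausMap [CommSemiring R] [StarRing R] [Fintype α] [Fintype κ] (B : κ → Matrix α β R) :
    Matrix α α R →ₗ[R] Matrix β β R where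
  toFun X := ∑ k, (B k)ᴴ * X * B k
  map_add' X Y := by simp only [Matrix.mul_add, Matrix.add_mul, Finset.sum_add_distrib]
  map_smul' c X := by
    simp only [Matrix.mul_smul, Matrix.smul_mul, Finset.smul_sum, RingHom.id_apply]

/-- The Choi matrix of `krausMap B`: its entry at `((g, h), (g', h'))` is the entry at `(h, h')` of
the image of the matrix unit at `(g, g')`. -/
def choiMatrix [NonUnitalSemiring R] [StarRing R] [Fintype κ] (B : κ → Matrix α β R) :
    Matrix (α × β) (α × β) R :=
  of fun i j => ∑ k, star (B k i.1 i.2) * B k j.1 j.2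

open scoped ComplexOrder in
theorem exists_choiMatrix_eq_of_posSemidef [RCLike 𝕜] [Finite α] [Finite β]
    {M : Matrix (α × β) (α × β) 𝕜} (hM : M.PosSemidef) :
    ∃ (m : ℕ) (B : Fin m → Matrix α β 𝕜), choiMatrix B = M := by
  obtain ⟨m, v, rfl⟩ := posSemidef_iff_eq_sum_vecMulVec.1 hM
  refine ⟨m, fun k => of fun g h => star (v k (g, h)), ?_⟩
  ext i j
  simp [choiMatrix, Matrix.sum_apply, vecMulVec_apply]

variable [Fintype α] [Fintype κ]

section CommSemiring

variable [CommSemiring R] [StarRing R] (B : κ → Matrix α β R)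

theorem krausMap_apply (X : Matrix α α R) : krausMap B X = ∑ k, (B k)ᴴ * X * B k := rfl

theorem krausMap_apply_apply (X : Matrix α α R) (h h' : β) :
    krausMap B X h h' = ∑ g, ∑ g', choiMatrix B (g, h) (g', h') * X g g' := by
  simp only [krausMap_apply, choiMatrix, Matrix.sum_apply, Matrix.mul_apply, conjTranspose_apply,
    of_apply, Finset.sum_mul]
  calc ∑ k, ∑ g', ∑ g, star (B k g h) * X g g' * B k g' h'
      = ∑ g', ∑ g, ∑ k, star (B k g h) * X g g' * B k g' h' := by
        rw [Finset.sum_comm]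
        exact Finset.sum_congr rfl fun _ _ => Finset.sum_comm
    _ = ∑ g, ∑ g', ∑ k, star (B k g h) * B k g' h' * X g g' := by
        rw [Finset.sum_comm]
        simp only [mul_right_comm]

theorem conjTranspose_krausMap (X : Matrix α α R) : (krausMap B X)ᴴ = krausMap B Xᴴ := by
  simp only [krausMap_apply, conjTranspose_sum, conjTranspose_mul, conjTranspose_conjTranspose,
    Matrix.mul_assoc]

theorem trace_krausMap_mul [Fintype β] (X : Matrix α α R) (Y : Matrix β β R) :
    (krausMap B X * Y).trace = (X * krausMap (fun k => (B k)ᴴ) Y).trace := by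
  simp only [krausMap_apply, Finset.sum_mul, Finset.mul_sum, trace_sum, conjTranspose_conjTranspose]
  refine Finset.sum_congr rfl fun k _ => ?_
  simp only [Matrix.mul_assoc]
  rw [trace_mul_comm]
  simp only [Matrix.mul_assoc]

variable {B}

theorem krausMap_hadamard {P : Matrix α α R} {Q : Matrix β β R}
    (hPQ : ∀ g g' h h', choiMatrix B (g, h) (g', h') ≠ 0 → P g g' = Q h h') (X : Matrix α α R) :
    krausMap B (P ⊙ X) = Q ⊙ krausMap B X := by
  ext h h'
  simp only [hadamard_apply, krausMap_apply_apply, Finset.mul_sum]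
  refine Finset.sum_congr rfl fun g _ => Finset.sum_congr rfl fun g' _ => ?_
  by_cases hB : choiMatrix B (g, h) (g', h') = 0
  · simp only [hB, zero_mul, mul_zero]
  · rw [hPQ g g' h h' hB, mul_left_comm]

theorem krausMap_mul_of_intertwines [Fintype β] {Z : Matrix α α R} {W : Matrix β β R}
    (hZW : ∀ k, Z * B k = B k * W) (X : Matrix α α R) :
    krausMap B (X * Z) = krausMap B X * W := by
  simp only [krausMap_apply, Finset.sum_mul, Matrix.mul_assoc, hZW]

variable [Fintype β] [DecidableEq α] [DecidableEq β] {X : Matrix α α R} {Y : Matrix β β R}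

theorem krausMap_pow_of_intertwines (hB : krausMap B 1 = 1) (hXY : ∀ k, X * B k = B k * Y)
    (n : ℕ) : krausMap B (X ^ n) = Y ^ n := by
  induction n with
  | zero => rw [pow_zero, pow_zero, hB]
  | succ n ih => rw [pow_succ, pow_succ, krausMap_mul_of_intertwines hXY, ih]

theorem trace_pow_eq_of_intertwines (hB : krausMap B 1 = 1)
    (hB' : krausMap (fun k => (B k)ᴴ) 1 = 1) (hXY : ∀ k, X * B k = B k * Y) (n : ℕ) :
    (X ^ n).trace = (Y ^ n).trace := by
  calc (X ^ n).trace = (X ^ n * krausMap (fun k => (B k)ᴴ) 1).trace := by rw [hB', mul_one]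
    _ = (krausMap B (X ^ n) * 1).trace := (trace_krausMap_mul B _ _).symm
    _ = (Y ^ n).trace := by rw [krausMap_pow_of_intertwines hB hXY, mul_one]

end CommSemiring

section Rigidity

variable [CommRing R] [StarRing R] [Fintype β] [DecidableEq α]

theorem sum_conjTranspose_mul_self_sub (B : κ → Matrix α β R) (X : Matrix α α R)
    (Y : Matrix β β R) :
    ∑ k, (X * B k - B k * Y)ᴴ * (X * B k - B k * Y) =
      krausMap B (Xᴴ * X) - krausMap B Xᴴ * Y - Yᴴ * krausMap B X + Yᴴ * krausMap B 1 * Y := by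
  simp only [krausMap_apply, Finset.sum_mul, Finset.mul_sum, ← Finset.sum_sub_distrib,
    ← Finset.sum_add_distrib]
  refine Finset.sum_congr rfl fun k _ => ?_
  simp only [conjTranspose_sub, conjTranspose_mul, Matrix.mul_sub, Matrix.sub_mul,
    Matrix.mul_assoc, Matrix.one_mul]
  abel

variable {B : κ → Matrix α β R} {X : Matrix α α R} {Y : Matrix β β R}

theorem intertwines_of_krausMap_eq [PartialOrder R] [StarOrderedRing R] [NoZeroDivisors R]
    [DecidableEq β] (hB : krausMap B 1 = 1) (hB' : krausMap (fun k => (B k)ᴴ) 1 = 1)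
    (hXY : krausMap B X = Y) (hYX : krausMap (fun k => (B k)ᴴ) Y = X) (k : κ) :
    X * B k = B k * Y := by
  have defect_eq : ∑ k, (X * B k - B k * Y)ᴴ * (X * B k - B k * Y) =
      krausMap B (Xᴴ * X) - Yᴴ * Y := by
    rw [sum_conjTranspose_mul_self_sub, ← conjTranspose_krausMap, hXY, hB, mul_one]
    abel
  have trace_image : (krausMap B (Xᴴ * X)).trace = (Xᴴ * X).trace := by
    simpa only [mul_one, hB'] using trace_krausMap_mul B (Xᴴ * X) 1
  have trace_eq : (Yᴴ * Y).trace = (Xᴴ * X).trace := by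
    rw [← hXY, conjTranspose_krausMap, trace_krausMap_mul, hXY, hYX]
  have sum_trace : ∑ k, ((X * B k - B k * Y)ᴴ * (X * B k - B k * Y)).trace = 0 := by
    rw [← trace_sum, defect_eq, trace_sub, trace_image, trace_eq, sub_self]
  have trace_nonneg (k : κ) : 0 ≤ ((X * B k - B k * Y)ᴴ * (X * B k - B k * Y)).trace :=
    (posSemidef_conjTranspose_mul_self _).trace_nonneg
  have trace_zero := (Finset.sum_eq_zero_iff_of_nonneg fun k _ => trace_nonneg k).1 sum_trace k
    (Finset.mem_univ k)
  exact sub_eq_zero.1 (trace_conjTranspose_mul_self_eq_zero_iff.1 trace_zero)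

open scoped ComplexOrder in
theorem charpoly_eq_of_krausMap_eq [RCLike 𝕜] [DecidableEq β] {B : κ → Matrix α β 𝕜}
    {X : Matrix α α 𝕜} {Y : Matrix β β 𝕜} (hX : X.IsHermitian) (hY : Y.IsHermitian)
    (hB : krausMap B 1 = 1) (hB' : krausMap (fun k => (B k)ᴴ) 1 = 1)
    (hXY : krausMap B X = Y) (hYX : krausMap (fun k => (B k)ᴴ) Y = X) :
    X.charpoly = Y.charpoly :=
  charpoly_eq_of_trace_pow_eq hX hY <|
    trace_pow_eq_of_intertwines hB hB' <| intertwines_of_krausMap_eq hB hB' hXY hYX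

end Rigidity

end KrausMap

theorem one_hadamard_adjMatrix_mul_self {V : Type*} [Fintype V] [DecidableEq V]
    (R : Type*) [NonAssocSemiring R] (G : SimpleGraph V) [DecidableRel G.Adj] :
    1 ⊙ (G.adjMatrix R * G.adjMatrix R) = G.degMatrix R := by
  rw [one_hadamard, SimpleGraph.degMatrix]
  exact congrArg diagonal (funext G.adjMatrix_mul_self_apply_self)

theorem relEq.symm {α β : Type*} {G : SimpleGraph α} {H : SimpleGraph β} {g g' : α} {h h' : β}
    (hr : relEq G H g g' h h') : relEq H G h h' g g' :=
  ⟨hr.1.symm, hr.2.symm⟩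

theorem relEq.compl {α β : Type*} {G : SimpleGraph α} {H : SimpleGraph β} {g g' : α} {h h' : β}
    (hr : relEq G H g g' h h') : relEq Gᶜ Hᶜ g g' h h' :=
  ⟨hr.1, by simp only [SimpleGraph.compl_adj, ne_eq, hr.1, hr.2]⟩

namespace IsIsoMatrix

variable {α β κ : Type*} [Fintype α] [Fintype β] [Fintype κ] {G : SimpleGraph α} {H : SimpleGraph β}
  {M : Matrix (α × β) (α × β) ℝ} {B : κ → Matrix α β ℝ}

theorem compl (hM : IsIsoMatrix G H M) : IsIsoMatrix Gᶜ Hᶜ M :=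
  ⟨hM.1, hM.2.1, fun g g' h h' hr => hM.2.2 g g' h h' (mt relEq.compl hr)⟩

theorem choiMatrix_conjTranspose (hB : IsIsoMatrix G H (choiMatrix B)) :
    IsIsoMatrix H G (choiMatrix fun k => (B k)ᴴ) :=
  ⟨hB.2.1, hB.1, fun h h' g g' hr => hB.2.2 g g' h h' (mt relEq.symm hr)⟩

theorem relEq_of_ne_zero (hM : IsIsoMatrix G H M) {g g' : α} {h h' : β}
    (hne : M (g, h) (g', h') ≠ 0) : relEq G H g g' h h' :=
  not_imp_comm.1 (hM.2.2 g g' h h') hne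

theorem krausMap_of_one (hB : IsIsoMatrix G H (choiMatrix B)) : krausMap B (of 1) = of 1 := by
  ext h h'
  simpa only [krausMap_apply_apply, of_apply, Pi.one_apply, mul_one] using hB.2.1 h h'

theorem krausMap_eq_of_relEq (hB : IsIsoMatrix G H (choiMatrix B)) {P : Matrix α α ℝ}
    {Q : Matrix β β ℝ} (hPQ : ∀ g g' h h', relEq G H g g' h h' → P g g' = Q h h') :
    krausMap B P = Q := by
  simpa only [hadamard_of_one, hB.krausMap_of_one] using
    krausMap_hadamard (fun g g' h h' hne => hPQ g g' h h' (hB.relEq_of_ne_zero hne)) (of 1)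

theorem krausMap_one [DecidableEq α] [DecidableEq β] (hB : IsIsoMatrix G H (choiMatrix B)) :
    krausMap B 1 = 1 :=
  hB.krausMap_eq_of_relEq fun _ _ _ _ hr => by simp only [Matrix.one_apply, hr.1]

theorem krausMap_one_hadamard [DecidableEq α] [DecidableEq β]
    (hB : IsIsoMatrix G H (choiMatrix B)) (X : Matrix α α ℝ) :
    krausMap B (1 ⊙ X) = 1 ⊙ krausMap B X :=
  krausMap_hadamard (fun _ _ _ _ hne => by
    simp only [Matrix.one_apply, (hB.relEq_of_ne_zero hne).1]) X

variable [DecidableRel G.Adj] [DecidableRel H.Adj]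

theorem krausMap_adjMatrix (hB : IsIsoMatrix G H (choiMatrix B)) :
    krausMap B (G.adjMatrix ℝ) = H.adjMatrix ℝ :=
  hB.krausMap_eq_of_relEq fun _ _ _ _ hr => by simp only [SimpleGraph.adjMatrix_apply, hr.2]

theorem adjMatrix_intertwines (hB : IsIsoMatrix G H (choiMatrix B)) (k : κ) :
    G.adjMatrix ℝ * B k = B k * H.adjMatrix ℝ := by
  classical
  have hB' := hB.choiMatrix_conjTranspose
  exact intertwines_of_krausMap_eq hB.krausMap_one hB'.krausMap_one hB.krausMap_adjMatrix
    hB'.krausMap_adjMatrix k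

variable [DecidableEq α] [DecidableEq β]

theorem krausMap_degMatrix (hB : IsIsoMatrix G H (choiMatrix B)) :
    krausMap B (G.degMatrix ℝ) = H.degMatrix ℝ := by
  rw [← one_hadamard_adjMatrix_mul_self, hB.krausMap_one_hadamard,
    krausMap_mul_of_intertwines hB.adjMatrix_intertwines, hB.krausMap_adjMatrix,
    one_hadamard_adjMatrix_mul_self]

theorem krausMap_lapMatrix (hB : IsIsoMatrix G H (choiMatrix B)) :
    krausMap B (G.lapMatrix ℝ) = H.lapMatrix ℝ := by
  rw [SimpleGraph.lapMatrix, map_sub, hB.krausMap_degMatrix, hB.krausMap_adjMatrix,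
    SimpleGraph.lapMatrix]

theorem charpoly_lapMatrix_eq (hM : IsIsoMatrix G H M) (hpos : M.PosSemidef) :
    (G.lapMatrix ℝ).charpoly = (H.lapMatrix ℝ).charpoly := by
  obtain ⟨m, B, rfl⟩ := exists_choiMatrix_eq_of_posSemidef hpos
  have hM' := hM.choiMatrix_conjTranspose
  exact charpoly_eq_of_krausMap_eq (G.isHermitian_lapMatrix ℝ) (H.isHermitian_lapMatrix ℝ)
    hM.krausMap_one hM'.krausMap_one hM.krausMap_lapMatrix hM'.krausMap_lapMatrix

end IsIsoMatrix

/-- If `G ≅_{S+} H`, then `G` and `H` have cospectral Laplacians, as do their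
complements. -/
theorem laplacian_cospectral_of_sPlus_iso {α β : Type*}
    [Fintype α] [Fintype β] [DecidableEq α] [DecidableEq β]
    (G : SimpleGraph α) (H : SimpleGraph β)
    [DecidableRel G.Adj] [DecidableRel H.Adj]
    (h : ∃ M, IsIsoMatrix G H M ∧ M.PosSemidef) :
    (G.lapMatrix ℝ).charpoly = (H.lapMatrix ℝ).charpoly ∧
    (Gᶜ.lapMatrix ℝ).charpoly = (Hᶜ.lapMatrix ℝ).charpoly := by
  obtain ⟨M, hM, hpos⟩ := h
  exact ⟨hM.charpoly_lapMatrix_eq hpos, hM.compl.charpoly_lapMatrix_eq hpos⟩
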